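/- For all i, g, h ∈ {0,1,…,d} with g ≤ i, h ≤ i, and such that at least one of g and h is not equal to i, one has (E_i* A_g E_i*)(E_i* A_h E_i*) = E_i* A_g A_h E_i*. -/

import Mathlib

open Finset Matrix

/-- Vertex set of the wreath product `K_{n 0} ≀ K_{n 1} ≀ ⋯ ≀ K_{n (d-1)}`
(paper indices `n_1, …, n_d` correspond to `n 0, …, n (d-1)`). -/
abbrev Vx (d : ℕ) (n : ℕ → ℕ) : Type := (i : Fin d) → Fin (n i)

/-- `delta x y = 0` if `x = y`; otherwise `delta x y` is the largest (1-based)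
index at which `x` and `y` differ. -/
def delta {d : ℕ} {n : ℕ → ℕ} (x y : Vx d n) : ℕ :=
  (Finset.univ.filter fun i => x i ≠ y i).sup fun i => (i : ℕ) + 1

/-- The `i`-th adjacency matrix of the wreath product: `(A i) x y = 1` iff `delta x y = i`. -/
noncomputable def A (d : ℕ) (n : ℕ → ℕ) (i : ℕ) : Matrix (Vx d n) (Vx d n) ℂ :=
  Matrix.of fun x y => if delta x y = i then 1 else 0

/-- The valencies: `k 0 = 1` and, for `1 ≤ i`, `k i = n_1 ⋯ n_{i-1} (n_i - 1)`,
i.e. `k i = n 0 ⋯ n (i-2) * (n (i-1) - 1)`. -/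
def k (n : ℕ → ℕ) (i : ℕ) : ℕ :=
  if i = 0 then 1 else (∏ j ∈ Finset.range (i - 1), n j) * (n (i - 1) - 1)

/-- The dual idempotent `E_i*` with respect to the base point `x₀`: the diagonal
0-1 matrix with `(E_i*)_{yy} = 1` iff `delta x₀ y = i`. -/
noncomputable def Es {d : ℕ} {n : ℕ → ℕ} (x₀ : Vx d n) (i : ℕ) :
    Matrix (Vx d n) (Vx d n) ℂ :=
  Matrix.of fun y z => if y = z ∧ delta x₀ y = i then 1 else 0

/-- The all-ones matrix `J`. -/
noncomputable def Jm (d : ℕ) (n : ℕ → ℕ) : Matrix (Vx d n) (Vx d n) ℂ :=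
  Matrix.of fun _ _ => 1

/-- The matrices `G i j`. -/
noncomputable def G {d : ℕ} {n : ℕ → ℕ} (x₀ : Vx d n) (i j : ℕ) :
    Matrix (Vx d n) (Vx d n) ℂ :=
  if i < j then ((k n j : ℂ))⁻¹ • (Es x₀ i * A d n j * Es x₀ j)
  else if j < i then ((k n j : ℂ))⁻¹ • (Es x₀ i * A d n i * Es x₀ j)
  else ((k n i : ℂ))⁻¹ • (Es x₀ i * Jm d n * Es x₀ i)

/-- The span `U` of the matrices `G i j`, `i, j ∈ [d]`. -/
noncomputable def Uspan {d : ℕ} {n : ℕ → ℕ} (x₀ : Vx d n) :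
    Submodule ℂ (Matrix (Vx d n) (Vx d n) ℂ) :=
  Submodule.span ℂ (Set.range fun p : Fin (d + 1) × Fin (d + 1) => G x₀ p.1 p.2)

/-- The Terwilliger algebra of the wreath product with respect to `x₀`. -/
noncomputable def Ter {d : ℕ} {n : ℕ → ℕ} (x₀ : Vx d n) :
    Subalgebra ℂ (Matrix (Vx d n) (Vx d n) ℂ) :=
  Algebra.adjoin ℂ
    ((Set.range fun i : Fin (d + 1) => A d n i) ∪ (Set.range fun i : Fin (d + 1) => Es x₀ i))

/-- The matrices `F i h`, for `1 ≤ i ≤ d` and `0 ≤ h ≤ i - 1`. -/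
noncomputable def F {d : ℕ} {n : ℕ → ℕ} (x₀ : Vx d n) (i h : ℕ) :
    Matrix (Vx d n) (Vx d n) ℂ :=
  if h < i - 1 then
    (∑ j ∈ Finset.range (h + 1), (k n j : ℂ))⁻¹ •
        (∑ j ∈ Finset.range (h + 1), Es x₀ i * A d n j * Es x₀ i)
      - (∑ j ∈ Finset.range (h + 2), (k n j : ℂ))⁻¹ •
          (∑ j ∈ Finset.range (h + 2), Es x₀ i * A d n j * Es x₀ i)
  else
    (∑ j ∈ Finset.range i, (k n j : ℂ))⁻¹ •
        (∑ j ∈ Finset.range i, Es x₀ i * A d n j * Es x₀ i)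
      - G x₀ i i

theorem delta_tri {d : ℕ} {n : ℕ → ℕ} (x y z : Vx d n) :
    delta x z ≤ max (delta x y) (delta y z) := by
  unfold delta
  apply Finset.sup_le
  intro j hj
  simp only [Finset.mem_filter, Finset.mem_univ, true_and] at hj
  by_cases hxy : x j = y j
  · have hyz : y j ≠ z j := fun e => hj (hxy.trans e)
    exact le_max_of_le_right
      (Finset.le_sup (f := fun i : Fin d => (i : ℕ) + 1) (by simpa using hyz))
  · exact le_max_of_le_left
      (Finset.le_sup (f := fun i : Fin d => (i : ℕ) + 1) (by simpa using hxy))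

theorem delta_symm {d : ℕ} {n : ℕ → ℕ} (x y : Vx d n) : delta x y = delta y x := by
  unfold delta
  simp only [ne_comm]

theorem Es_eq_diagonal {d : ℕ} {n : ℕ → ℕ} (x₀ : Vx d n) (i : ℕ) :
    Es x₀ i = Matrix.diagonal (fun y => if delta x₀ y = i then (1 : ℂ) else 0) := by
  ext y z
  by_cases hyz : y = z
  · subst hyz; simp [Es]
  · simp [Es, hyz]

/-- for `g, h ≤ i` with not both equal to `i`,
`(E_i* A_g E_i*)(E_i* A_h E_i*) = E_i* A_g A_h E_i*`. -/
theorem stmt18 (d : ℕ) (hd : 1 ≤ d) (n : ℕ → ℕ) (hn : ∀ i < d, 2 ≤ n i)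
    (x₀ : Vx d n) (i g h : ℕ) (hi : i ≤ d) (hg : g ≤ i) (hh : h ≤ i)
    (hne : g ≠ i ∨ h ≠ i) :
    (Es x₀ i * A d n g * Es x₀ i) * (Es x₀ i * A d n h * Es x₀ i)
      = Es x₀ i * (A d n g * A d n h) * Es x₀ i := by
  ext y z
  rw [Es_eq_diagonal]
  simp only [Matrix.mul_apply (M := _ * _ * _), Matrix.mul_diagonal, Matrix.diagonal_mul]
  rw [Matrix.mul_apply, Finset.mul_sum, Finset.sum_mul]
  refine Finset.sum_congr rfl fun w _ => ?_
  by_cases h1 : delta x₀ y = i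
  swap
  · simp [h1]
  by_cases h2 : delta x₀ z = i
  swap
  · simp [h2]
  by_cases h3 : delta y w = g
  swap
  · simp [A, h3]
  by_cases h4 : delta w z = h
  swap
  · simp [A, h4]
  have h5 : delta x₀ w = i := by
    have t1 := delta_tri x₀ y w
    have t2 := delta_tri x₀ w y
    have t3 := delta_tri x₀ w z
    have t4 := delta_symm y w
    omega
  simp [h1, h2, h5]
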